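/- There is an absolute constant A > 0 such that for all real random variables X and Y with bounded ranges (not necessarily independent) and all n ∈ ℕ, Hₙ(X − Y) ≤ 3·Hₙ(X + Y) + 4·Hₙ(X) + 4·Hₙ(Y) − 5·Hₙ(X, Y) + A. -/

import Mathlib

open MeasureTheory ProbabilityTheory Real

/-- The dyadic discretization map `D_n(x) = 2^{-n} ⌊2^n x⌋`. -/
noncomputable def Dn (n : ℕ) (x : ℝ) : ℝ := (⌊(2 : ℝ) ^ n * x⌋ : ℝ) / (2 : ℝ) ^ n

/-- Shannon entropy (base 2) of the discrete random variable `f` under `P`. -/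
noncomputable def entOf {Ω : Type*} [MeasurableSpace Ω] {S : Type*}
    (P : Measure Ω) (f : Ω → S) : ℝ :=
  ∑' s : S, -((P (f ⁻¹' {s})).toReal * Real.logb 2 (P (f ⁻¹' {s})).toReal)

/-- `H_n(X)`: entropy of `D_n(X)`. -/
noncomputable def Hn {Ω : Type*} [MeasurableSpace Ω] (P : Measure Ω) (n : ℕ) (X : Ω → ℝ) : ℝ :=
  entOf P (fun ω => Dn n (X ω))

/-- `H_n(X,Y)`: entropy of `(D_n(X), D_n(Y))`. -/
noncomputable def Hn2 {Ω : Type*} [MeasurableSpace Ω] (P : Measure Ω) (n : ℕ)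
    (X Y : Ω → ℝ) : ℝ :=
  entOf P (fun ω => (Dn n (X ω), Dn n (Y ω)))

/-
Katz and Tao's argument, in entropy form. Write `H` for entropy and take two copies `(x, y)`,
`(x, y')` of `(X, Y)` that are conditionally independent given `X`; this pair has entropy
`2 H(X, Y) - H(X)`. Chain four such pairs, the first two sharing the sums `x + y` and `x + y'`, the
middle two sharing `y` and `y'`, the last two sharing `x + y` and `y'`, and otherwise conditionally
independent. The entropy of the whole chain is then at least
`8 H(X, Y) - 4 H(X) - 3 H(X + Y) - 3 H(Y)`. On the other hand the difference `x - y'` of the last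
pair is also determined by the first pair together with the third `x` and the fourth `y`, and these
data together with the last `(x, y')` determine the chain, so submodularity bounds the entropy of
the chain above by `3 H(X, Y) + H(Y) - H(X - Y)`. For the dyadic roundings of real variables, each
use of additivity up to a carry costs at most one bit.
-/

open Set

section Entropy

variable {Ω S T : Type*} [MeasurableSpace Ω] {P : Measure Ω}

lemma measure_fiber_comp {α : Type*} [MeasurableSpace α] [DiscreteMeasurableSpace α]
    {μ : Measure α} {τ : Ω → α} (hτ : MeasurePreserving τ P μ) (f : α → S) (s : S) :
    P ((fun ω => f (τ ω)) ⁻¹' {s}) = μ (f ⁻¹' {s}) :=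
  hτ.measure_preimage (MeasurableSet.of_discrete (s := f ⁻¹' {s})).nullMeasurableSet

lemma entOf_comp_measurePreserving {α : Type*} [MeasurableSpace α] [DiscreteMeasurableSpace α]
    {μ : Measure α} {τ : Ω → α} (hτ : MeasurePreserving τ P μ) (f : α → S) :
    entOf P (fun ω => f (τ ω)) = entOf μ f := by
  simp only [entOf, measure_fiber_comp hτ]

lemma entOf_comp_injective {φ : S → T} (hφ : φ.Injective) (f : Ω → S) :
    entOf P (fun ω => φ (f ω)) = entOf P f := by
  have hfiber (s : S) : (fun ω => φ (f ω)) ⁻¹' {φ s} = f ⁻¹' {s} := by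
    ext ω
    exact hφ.eq_iff
  have hsupport : Function.support (fun t => -((P ((fun ω => φ (f ω)) ⁻¹' {t})).toReal *
      logb 2 (P ((fun ω => φ (f ω)) ⁻¹' {t})).toReal)) ⊆ range φ := by
    intro t ht
    by_contra hφt
    have hempty : (fun ω => φ (f ω)) ⁻¹' {t} = ∅ :=
      eq_empty_of_forall_notMem fun ω hω => hφt ⟨f ω, hω⟩
    simp [hempty] at ht
  simp only [entOf, ← hφ.tsum_eq hsupport, hfiber]

lemma entOf_const [IsProbabilityMeasure P] (s : S) : entOf P (fun _ => s) = 0 := by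
  rw [entOf, tsum_eq_single s]
  · simp
  · intro t ht
    simp [ht.symm]

end Entropy

/-- The surprisal (information content, in bits) of the value that `f` takes at `ω`; its mean is
the entropy of `f`. -/
noncomputable def surprisal {Ω S : Type*} [MeasurableSpace Ω] (P : Measure Ω) (f : Ω → S) (ω : Ω) :
    ℝ :=
  -logb 2 (P.real (f ⁻¹' {f ω}))

lemma ae_measureReal_fiber_pos {α S : Type*} [Countable α] [MeasurableSpace α] (P : Measure α)
    [IsFiniteMeasure P] (f : α → S) : ∀ᵐ a ∂P, 0 < P.real (f ⁻¹' {f a}) := by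
  refine ae_iff_of_countable.2 fun a ha => ENNReal.toReal_pos (fun h => ha ?_) (measure_ne_top _ _)
  exact measure_mono_null (by simp) h

lemma surprisal_le_of_ae_eq_comp {α S T : Type*} [Countable α] [MeasurableSpace α] {P : Measure α}
    [IsFiniteMeasure P] {f : α → S} {g : α → T} {φ : S → T}
    (h : ∀ᵐ a ∂P, g a = φ (f a)) : surprisal P g ≤ᵐ[P] surprisal P f := by
  filter_upwards [h, ae_measureReal_fiber_pos P f] with a ha hpos
  have hfiber : P.real (f ⁻¹' {f a}) ≤ P.real (g ⁻¹' {g a}) := by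
    refine ENNReal.toReal_mono (measure_ne_top _ _) (measure_mono_ae ?_)
    filter_upwards [h] with b hb hfb
    change g b = g a
    rw [hb, ha, mem_singleton_iff.1 hfb]
  exact neg_le_neg (logb_le_logb_of_le one_lt_two hpos hfiber)

lemma surprisal_comp {Ω α S : Type*} [MeasurableSpace Ω] [MeasurableSpace α]
    [DiscreteMeasurableSpace α] {P : Measure Ω} {μ : Measure α} {τ : Ω → α}
    (hτ : MeasurePreserving τ P μ) (f : α → S) (ω : Ω) :
    surprisal P (fun ω => f (τ ω)) ω = surprisal μ f (τ ω) := by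
  simp only [surprisal, measureReal_def, measure_fiber_comp hτ]

section Shannon

variable {α β S T : Type*} [Finite α] [MeasurableSpace α] [DiscreteMeasurableSpace α]
  {P : Measure α}

lemma integral_comp_eq_tsum_fiber (P : Measure α) [IsFiniteMeasure P] (f : α → S) (F : S → ℝ) :
    ∫ a, F (f a) ∂P = ∑' s, P.real (f ⁻¹' {s}) * F s := by
  classical
  have := Fintype.ofFinite α
  have hfiber (s : S) : ∑ a with f a = s, P.real {a} = P.real (f ⁻¹' {s}) := by
    rw [sum_measureReal_singleton]
    congr 1
    ext a
    simp
  have hzero (s : S) (hs : s ∉ Finset.univ.image f) : P.real (f ⁻¹' {s}) * F s = 0 := by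
    rw [preimage_singleton_eq_empty.2 (by simpa using hs), measureReal_empty, zero_mul]
  rw [integral_fintype .of_finite, tsum_eq_sum hzero,
    ← Finset.sum_fiberwise_of_maps_to (fun a _ => Finset.mem_image_of_mem f (Finset.mem_univ a))]
  refine Finset.sum_congr rfl fun s _ => ?_
  rw [← hfiber, Finset.sum_mul]
  refine Finset.sum_congr rfl fun a ha => ?_
  rw [(Finset.mem_filter.1 ha).2, smul_eq_mul]

lemma entOf_eq_integral_surprisal (P : Measure α) [IsFiniteMeasure P] (f : α → S) :
    entOf P f = ∫ a, surprisal P f a ∂P := by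
  refine Eq.trans (tsum_congr fun s => ?_)
    (integral_comp_eq_tsum_fiber P f fun s => -logb 2 (P.real (f ⁻¹' {s}))).symm
  rw [mul_neg, measureReal_def]

lemma integral_surprisal_comp [IsFiniteMeasure P] [MeasurableSpace β] [DiscreteMeasurableSpace β]
    {μ : Measure β} {τ : α → β} (hτ : MeasurePreserving τ P μ) (f : β → S) :
    ∫ a, surprisal μ f (τ a) ∂P = entOf μ f := by
  simp only [← surprisal_comp hτ, ← entOf_eq_integral_surprisal, entOf_comp_measurePreserving hτ]

lemma entOf_le_of_ae_eq_comp [IsFiniteMeasure P] {f : α → S} {g : α → T} (φ : S → T)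
    (h : ∀ᵐ a ∂P, g a = φ (f a)) : entOf P g ≤ entOf P f := by
  simpa only [entOf_eq_integral_surprisal] using
    integral_mono_ae .of_finite .of_finite (surprisal_le_of_ae_eq_comp h)

/-- Gibbs' inequality: the right-hand side is the cross entropy of the law of `k ∘ τ` under `P`
relative to the law of `k` under `Q`. -/
lemma entOf_comp_le_integral_surprisal [MeasurableSpace β] [DiscreteMeasurableSpace β]
    {Q : Measure β} [IsProbabilityMeasure P] [IsProbabilityMeasure Q] (τ : α → β) (k : β → S)
    (hpos : ∀ᵐ a ∂P, 0 < Q.real (k ⁻¹' {k (τ a)})) :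
    entOf P (fun a => k (τ a)) ≤ ∫ a, surprisal Q k (τ a) ∂P := by
  set f : α → S := fun a => k (τ a)
  let ratio (s : S) : ℝ := Q.real (k ⁻¹' {s}) / P.real (f ⁻¹' {s})
  have hratio : ∫ a, ratio (f a) ∂P ≤ 1 := by
    rw [integral_comp_eq_tsum_fiber P f ratio]
    refine Real.tsum_le_of_sum_le (fun s => by positivity) fun u => ?_
    calc ∑ s ∈ u, P.real (f ⁻¹' {s}) * ratio s
        ≤ ∑ s ∈ u, Q.real (k ⁻¹' {s}) :=
          Finset.sum_le_sum fun s _ => by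
            rw [mul_div_left_comm]
            exact mul_le_of_le_one_right measureReal_nonneg (div_self_le_one _)
      _ = Q.real (k ⁻¹' u) := sum_measureReal_preimage_singleton u fun _ _ => .of_discrete
      _ ≤ 1 := measureReal_le_one
  have hlog : ∀ᵐ a ∂P, surprisal P f a - surprisal Q k (τ a) ≤ (ratio (f a) - 1) / log 2 := by
    filter_upwards [hpos, ae_measureReal_fiber_pos P f] with a hQ hP
    calc surprisal P f a - surprisal Q k (τ a)
        = log (ratio (f a)) / log 2 := by
          simp only [surprisal, logb, ratio]
          rw [log_div hQ.ne' hP.ne']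
          ring
      _ ≤ (ratio (f a) - 1) / log 2 := by
          gcongr
          exact log_le_sub_one_of_pos (div_pos hQ hP)
  have hint := integral_mono_ae .of_finite .of_finite hlog
  rw [integral_sub .of_finite .of_finite, integral_div, integral_sub .of_finite .of_finite,
    ← entOf_eq_integral_surprisal] at hint
  have hnonpos : (∫ a, ratio (f a) ∂P - ∫ _, (1 : ℝ) ∂P) / log 2 ≤ 0 :=
    div_nonpos_of_nonpos_of_nonneg (by simpa using hratio) (log_nonneg one_le_two)
  linarith

end Shannon

section CondIndepCoupling

/-- The coupling of `P` and `Q` that is conditionally independent given the common value of `c`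
and `d`: it is meant for `c` and `d` with the same law, and is concentrated on `c z.1 = d z.2`.
A null fibre contributes `∞ • 0 = 0`. -/
noncomputable def condIndepCoupling {α β S : Type*} [MeasurableSpace α] [MeasurableSpace β]
    (P : Measure α) (Q : Measure β) (c : α → S) (d : β → S) : Measure (α × β) :=
  .sum fun s => (P (c ⁻¹' {s}))⁻¹ • (P.restrict (c ⁻¹' {s})).prod (Q.restrict (d ⁻¹' {s}))

lemma map_swap_condIndepCoupling {α β S : Type*} [MeasurableSpace α] [MeasurableSpace β]
    {P : Measure α} {Q : Measure β} [SFinite P] [SFinite Q] {c : α → S} {d : β → S}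
    (h : ∀ s, P (c ⁻¹' {s}) = Q (d ⁻¹' {s})) :
    (condIndepCoupling P Q c d).map Prod.swap = condIndepCoupling Q P d c := by
  simp only [condIndepCoupling, Measure.map_sum measurable_swap.aemeasurable, Measure.map_smul,
    Measure.prod_swap, h]

variable {α β S T U : Type*} [Finite α] [MeasurableSpace α] [DiscreteMeasurableSpace α]
  [Finite β] [MeasurableSpace β] [DiscreteMeasurableSpace β]
  {P : Measure α} {Q : Measure β} {c : α → S} {d : β → S}

lemma condIndepCoupling_prod (A : Set α) (B : Set β) :
    condIndepCoupling P Q c d (A ×ˢ B) =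
      ∑' s, (P (c ⁻¹' {s}))⁻¹ * (P (A ∩ c ⁻¹' {s}) * Q (B ∩ d ⁻¹' {s})) := by
  simp only [condIndepCoupling, Measure.sum_apply _ .of_discrete, Measure.smul_apply,
    Measure.prod_prod, Measure.restrict_apply .of_discrete, smul_eq_mul]

lemma condIndepCoupling_prod_of_subset {A : Set α} {s : S} (hA : A ⊆ c ⁻¹' {s}) (B : Set β) :
    condIndepCoupling P Q c d (A ×ˢ B) = (P (c ⁻¹' {s}))⁻¹ * (P A * Q (B ∩ d ⁻¹' {s})) := by
  rw [condIndepCoupling_prod, tsum_eq_single s, inter_eq_self_of_subset_left hA]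
  intro t hts
  have hempty : A ∩ c ⁻¹' {t} = ∅ :=
    eq_empty_of_forall_notMem fun a ha => hts (ha.2.symm.trans (hA ha.1))
  simp [hempty]

lemma measurePreserving_fst_condIndepCoupling [IsFiniteMeasure P]
    (h : ∀ s, P (c ⁻¹' {s}) = Q (d ⁻¹' {s})) :
    MeasurePreserving Prod.fst (condIndepCoupling P Q c d) P := by
  refine ⟨measurable_fst, Measure.ext_of_singleton fun a => ?_⟩
  have ha : {a} ⊆ c ⁻¹' {c a} := by simp
  rw [Measure.map_apply measurable_fst .of_discrete, ← prod_univ,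
    condIndepCoupling_prod_of_subset ha, univ_inter, ← h]
  obtain h0 | h0 := eq_or_ne (P (c ⁻¹' {c a})) 0
  · simp [measure_mono_null ha h0]
  · rw [mul_comm, mul_assoc, ENNReal.mul_inv_cancel h0 (measure_ne_top _ _), mul_one]

lemma measurePreserving_snd_condIndepCoupling [IsFiniteMeasure Q]
    (h : ∀ s, P (c ⁻¹' {s}) = Q (d ⁻¹' {s})) :
    MeasurePreserving Prod.snd (condIndepCoupling P Q c d) Q :=
  (measurePreserving_fst_condIndepCoupling fun s => (h s).symm).comp
    ⟨measurable_swap, map_swap_condIndepCoupling h⟩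

lemma isProbabilityMeasure_condIndepCoupling [IsProbabilityMeasure P]
    (h : ∀ s, P (c ⁻¹' {s}) = Q (d ⁻¹' {s})) :
    IsProbabilityMeasure (condIndepCoupling P Q c d) := by
  have hfst := measurePreserving_fst_condIndepCoupling h
  rwa [← Measure.isProbabilityMeasure_map_iff hfst.measurable.aemeasurable, hfst.map_eq]

lemma ae_eq_condIndepCoupling :
    ∀ᵐ z ∂condIndepCoupling P Q c d, c z.1 = d z.2 := by
  refine ae_iff_of_countable.2 fun z hz => ?_
  contrapose! hz
  have hempty : {z.2} ∩ d ⁻¹' {c z.1} = ∅ :=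
    eq_empty_of_forall_notMem fun b hb => hz (by rw [← hb.2, hb.1])
  rw [← Prod.mk.eta (p := z), ← singleton_prod_singleton,
    condIndepCoupling_prod_of_subset (s := c z.1) (by simp), hempty]
  simp

lemma measureReal_fiber_condIndepCoupling {f : α → T} {g : β → U} (hf : c.FactorsThrough f)
    (hg : d.FactorsThrough g) {a : α} {b : β} (hab : c a = d b) :
    (condIndepCoupling P Q c d).real (Prod.map f g ⁻¹' {Prod.map f g (a, b)}) =
      (P.real (c ⁻¹' {c a}))⁻¹ * (P.real (f ⁻¹' {f a}) * Q.real (g ⁻¹' {g b})) := by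
  have hfiber : Prod.map f g ⁻¹' {Prod.map f g (a, b)} = (f ⁻¹' {f a}) ×ˢ (g ⁻¹' {g b}) := by
    rw [Prod.map_apply, ← singleton_prod_singleton]
    rfl
  have hfc : f ⁻¹' {f a} ⊆ c ⁻¹' {c a} := fun x hx => hf hx
  have hgd : g ⁻¹' {g b} ⊆ d ⁻¹' {c a} := fun x hx => (hg hx).trans hab.symm
  rw [hfiber, measureReal_def, condIndepCoupling_prod_of_subset hfc,
    inter_eq_self_of_subset_left hgd, ENNReal.toReal_mul, ENNReal.toReal_inv, ENNReal.toReal_mul]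
  rfl

lemma surprisal_condIndepCoupling {f : α → T} {g : β → U} (hf : c.FactorsThrough f)
    (hg : d.FactorsThrough g) {a : α} {b : β} (hab : c a = d b) (ha : 0 < P.real (f ⁻¹' {f a}))
    (hb : 0 < Q.real (g ⁻¹' {g b})) (hc : 0 < P.real (c ⁻¹' {c a})) :
    surprisal (condIndepCoupling P Q c d) (Prod.map f g) (a, b) =
      surprisal P f a + surprisal Q g b - surprisal P c a := by
  rw [surprisal, measureReal_fiber_condIndepCoupling hf hg hab,
    logb_mul (inv_pos.2 hc).ne' (mul_pos ha hb).ne', logb_mul ha.ne' hb.ne', logb_inv]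
  simp only [surprisal]
  ring

lemma entOf_prodMap_condIndepCoupling [IsProbabilityMeasure P] [IsProbabilityMeasure Q]
    (h : ∀ s, P (c ⁻¹' {s}) = Q (d ⁻¹' {s})) {f : α → T} {g : β → U}
    (hf : c.FactorsThrough f) (hg : d.FactorsThrough g) :
    entOf (condIndepCoupling P Q c d) (Prod.map f g) = entOf P f + entOf Q g - entOf P c := by
  have := isProbabilityMeasure_condIndepCoupling h
  have hfst := measurePreserving_fst_condIndepCoupling h
  have hsnd := measurePreserving_snd_condIndepCoupling h
  have hae : ∀ᵐ z ∂condIndepCoupling P Q c d,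
      surprisal (condIndepCoupling P Q c d) (Prod.map f g) z =
        surprisal P f z.1 + surprisal Q g z.2 - surprisal P c z.1 := by
    filter_upwards [ae_eq_condIndepCoupling,
      hfst.quasiMeasurePreserving.ae (ae_measureReal_fiber_pos P f),
      hsnd.quasiMeasurePreserving.ae (ae_measureReal_fiber_pos Q g),
      hfst.quasiMeasurePreserving.ae (ae_measureReal_fiber_pos P c)] with z hz ha hb hc
    exact surprisal_condIndepCoupling hf hg hz ha hb hc
  rw [entOf_eq_integral_surprisal, integral_congr_ae hae, integral_sub .of_finite .of_finite,
    integral_add .of_finite .of_finite, integral_surprisal_comp hfst,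
    integral_surprisal_comp hsnd, integral_surprisal_comp hfst]

end CondIndepCoupling

section Submodularity

variable {α S T U : Type*} [Finite α] [MeasurableSpace α] [DiscreteMeasurableSpace α]
  {P : Measure α} [IsProbabilityMeasure P]

/-- This is Gibbs' inequality against the coupling of two copies of `P` over `c`, relative to which
the cross entropy of `(f, g)` is exactly `H(f) + H(g) - H(c)`. -/
lemma entOf_prodMk_add_le_of_factorsThrough {f : α → S} {g : α → T} {c : α → U}
    (hf : c.FactorsThrough f) (hg : c.FactorsThrough g) :
    entOf P (fun a => (f a, g a)) + entOf P c ≤ entOf P f + entOf P g := by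
  have := isProbabilityMeasure_condIndepCoupling (P := P) (c := c) fun _ => rfl
  have hpos := (ae_measureReal_fiber_pos P f).and
    ((ae_measureReal_fiber_pos P g).and (ae_measureReal_fiber_pos P c))
  have hgibbs : entOf P (fun a => (f a, g a)) ≤
      ∫ a, surprisal (condIndepCoupling P P c c) (Prod.map f g) (a, a) ∂P := by
    refine entOf_comp_le_integral_surprisal (fun a => (a, a)) (Prod.map f g) ?_
    filter_upwards [hpos] with a ⟨ha, hb, hc⟩
    rw [measureReal_fiber_condIndepCoupling hf hg rfl]
    positivity
  have hdiag : ∀ᵐ a ∂P, surprisal (condIndepCoupling P P c c) (Prod.map f g) (a, a) =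
      surprisal P f a + surprisal P g a - surprisal P c a :=
    hpos.mono fun a ⟨ha, hb, hc⟩ => surprisal_condIndepCoupling hf hg rfl ha hb hc
  rw [integral_congr_ae hdiag, integral_sub .of_finite .of_finite,
    integral_add .of_finite .of_finite] at hgibbs
  simp only [← entOf_eq_integral_surprisal] at hgibbs
  exact le_sub_iff_add_le.1 hgibbs

lemma entOf_prodMk_add_le {f : α → S} {g : α → T} {c : α → U} (φ : S → U) (ψ : T → U)
    (hf : ∀ᵐ a ∂P, c a = φ (f a)) (hg : ∀ᵐ a ∂P, c a = ψ (g a)) :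
    entOf P (fun a => (f a, g a)) + entOf P c ≤ entOf P f + entOf P g := by
  have hfc : entOf P (fun a => (f a, c a)) ≤ entOf P f :=
    entOf_le_of_ae_eq_comp (fun s => (s, φ s)) (hf.mono fun a ha => by rw [ha])
  have hgc : entOf P (fun a => (g a, c a)) ≤ entOf P g :=
    entOf_le_of_ae_eq_comp (fun t => (t, ψ t)) (hg.mono fun a ha => by rw [ha])
  have hfg : entOf P (fun a => (f a, g a)) ≤ entOf P (fun a => ((f a, c a), (g a, c a))) :=
    entOf_le_of_ae_eq_comp (fun z => (z.1.1, z.2.1)) (.of_forall fun _ => rfl)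
  have hsub : entOf P (fun a => ((f a, c a), (g a, c a))) + entOf P c ≤
      entOf P (fun a => (f a, c a)) + entOf P (fun a => (g a, c a)) :=
    entOf_prodMk_add_le_of_factorsThrough (fun _ _ h => congrArg Prod.snd h)
      (fun _ _ h => congrArg Prod.snd h)
  linarith

lemma entOf_prodMk_le_add (f : α → S) (g : α → T) :
    entOf P (fun a => (f a, g a)) ≤ entOf P f + entOf P g := by
  have hsub := entOf_prodMk_add_le (P := P) (f := f) (g := g) (fun _ => ()) (fun _ => ())
    (.of_forall fun _ => rfl) (.of_forall fun _ => rfl)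
  rwa [entOf_const, add_zero] at hsub

lemma entOf_le_logb_card {β : Type*} [Finite β] (f : α → β) :
    entOf P f ≤ logb 2 (Nat.card β) := by
  have := P.nonempty_of_neZero
  have : Nonempty β := this.map f
  have := Fintype.ofFinite β
  let _ : MeasurableSpace β := ⊤
  have huniform (b : β) : (uniformOn (univ : Set β)).real {b} = (Nat.card β : ℝ)⁻¹ := by
    simp [measureReal_def, uniformOn_univ]
  have hpos : (0 : ℝ) < Nat.card β := Nat.cast_pos.2 Nat.card_pos
  calc entOf P f
      ≤ ∫ a, surprisal (uniformOn (univ : Set β)) id (f a) ∂P := by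
        refine entOf_comp_le_integral_surprisal f id (.of_forall fun a => ?_)
        rw [preimage_id, huniform]
        positivity
    _ = logb 2 (Nat.card β) := by simp [surprisal, huniform]

lemma entOf_le_add_logb_card {β : Type*} [Finite β] {f : α → S} {g : α → T} (b : α → β)
    (φ : S → β → T) (h : ∀ᵐ a ∂P, g a = φ (f a) (b a)) :
    entOf P g ≤ entOf P f + logb 2 (Nat.card β) :=
  calc entOf P g
      ≤ entOf P (fun a => (f a, b a)) := entOf_le_of_ae_eq_comp (Function.uncurry φ) h
    _ ≤ entOf P f + entOf P b := entOf_prodMk_le_add f b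
    _ ≤ entOf P f + logb 2 (Nat.card β) := by gcongr; exact entOf_le_logb_card b

lemma entOf_le_add_one {f g : α → S} (φ : S → S) (h : ∀ᵐ a ∂P, g a = f a ∨ g a = φ (f a)) :
    entOf P g ≤ entOf P f + 1 := by
  classical
  have hbit := entOf_le_add_logb_card (P := P) (f := f) (g := g) (fun a => decide (g a = f a))
    (fun s b => if b then s else φ s) <| h.mono fun a ha => by
      by_cases heq : g a = f a
      · simp [heq]
      · simpa [heq] using ha
  simpa using hbit

end Submodularity

lemma entOf_prodMap_le_add {α β S T : Type*} [Finite α] [MeasurableSpace α]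
    [DiscreteMeasurableSpace α] [Finite β] [MeasurableSpace β] [DiscreteMeasurableSpace β]
    {μ : Measure (α × β)} [IsProbabilityMeasure μ] {P : Measure α} {Q : Measure β}
    (hfst : MeasurePreserving Prod.fst μ P) (hsnd : MeasurePreserving Prod.snd μ Q) (f : α → S)
    (g : β → T) : entOf μ (Prod.map f g) ≤ entOf P f + entOf Q g := by
  rw [← entOf_comp_measurePreserving hfst f, ← entOf_comp_measurePreserving hsnd g]
  exact entOf_prodMk_le_add _ _

section CondIndepChain

variable {E S₁ S₂ S₃ T : Type*} [Finite E] [MeasurableSpace E] [DiscreteMeasurableSpace E]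
  {Q : Measure E} [IsProbabilityMeasure Q] {a : E → S₁} {b : E → S₂} {c : E → S₃}

lemma exists_condIndep_chain {V : E → T} (ha : a.FactorsThrough V) (hb : b.FactorsThrough V)
    (hc : c.FactorsThrough V) :
    ∃ μ : Measure (E × E × E × E), IsProbabilityMeasure μ ∧
      (MeasurePreserving (fun z => z.1) μ Q ∧ MeasurePreserving (fun z => z.2.1) μ Q ∧
        MeasurePreserving (fun z => z.2.2.1) μ Q ∧ MeasurePreserving (fun z => z.2.2.2) μ Q) ∧
      (∀ᵐ z ∂μ, a z.1 = a z.2.1 ∧ b z.2.1 = b z.2.2.1 ∧ c z.2.2.1 = c z.2.2.2) ∧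
      entOf μ (Prod.map V (Prod.map V (Prod.map V V))) =
        4 * entOf Q V - entOf Q a - entOf Q b - entOf Q c := by
  have h₁ (s : S₃) : Q (c ⁻¹' {s}) = Q (c ⁻¹' {s}) := rfl
  set μ₁ := condIndepCoupling Q Q c c
  have := isProbabilityMeasure_condIndepCoupling h₁
  have hfst₁ : MeasurePreserving Prod.fst μ₁ Q := measurePreserving_fst_condIndepCoupling h₁
  have hsnd₁ : MeasurePreserving Prod.snd μ₁ Q := measurePreserving_snd_condIndepCoupling h₁
  have h₂ (s : S₂) := (measure_fiber_comp hfst₁ b s).symm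
  set μ₂ := condIndepCoupling Q μ₁ b fun z => b z.1
  have := isProbabilityMeasure_condIndepCoupling h₂
  have hfst₂ : MeasurePreserving Prod.fst μ₂ Q := measurePreserving_fst_condIndepCoupling h₂
  have hsnd₂ : MeasurePreserving Prod.snd μ₂ μ₁ := measurePreserving_snd_condIndepCoupling h₂
  have h₃ (s : S₁) := (measure_fiber_comp hfst₂ a s).symm
  set μ₃ := condIndepCoupling Q μ₂ a fun z => a z.1
  have hsnd₃ : MeasurePreserving Prod.snd μ₃ μ₂ := measurePreserving_snd_condIndepCoupling h₃
  refine ⟨μ₃, isProbabilityMeasure_condIndepCoupling h₃,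
    ⟨measurePreserving_fst_condIndepCoupling h₃, hfst₂.comp hsnd₃,
      hfst₁.comp (hsnd₂.comp hsnd₃), hsnd₁.comp (hsnd₂.comp hsnd₃)⟩, ?_, ?_⟩
  · have hμ₁ : ∀ᵐ z ∂μ₁, c z.1 = c z.2 := ae_eq_condIndepCoupling
    have hμ₂ : ∀ᵐ z ∂μ₂, b z.1 = b z.2.1 := ae_eq_condIndepCoupling
    have hμ₃ : ∀ᵐ z ∂μ₃, a z.1 = a z.2.1 := ae_eq_condIndepCoupling
    exact hμ₃.and ((hsnd₃.quasiMeasurePreserving.ae hμ₂).and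
      ((hsnd₂.comp hsnd₃).quasiMeasurePreserving.ae hμ₁))
  · rw [entOf_prodMap_condIndepCoupling h₃ ha fun _ _ h => ha (congrArg Prod.fst h),
      entOf_prodMap_condIndepCoupling h₂ hb fun _ _ h => hb (congrArg Prod.fst h),
      entOf_prodMap_condIndepCoupling h₁ hc hc]
    ring

end CondIndepChain

section KatzTao

variable {α G : Type*} [AddCommGroup G]

/-- Katz and Tao's configuration: four pairs of sample points, with equal `X`-values inside each
pair. Reading a pair as `(x, y, y')`, the first two share `x + y` and `x + y'`, the middle two share
`y` and `y'`, and the last two share `y'` and `x + y`. -/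
structure IsKatzTaoChain (X Y : α → G) (z : (α × α) × (α × α) × (α × α) × (α × α)) : Prop where
  fiber₁ : X z.1.1 = X z.1.2
  fiber₂ : X z.2.1.1 = X z.2.1.2
  fiber₃ : X z.2.2.1.1 = X z.2.2.1.2
  fiber₄ : X z.2.2.2.1 = X z.2.2.2.2
  add₁₂ : X z.1.1 + Y z.1.1 = X z.2.1.1 + Y z.2.1.1
  add₁₂' : X z.1.2 + Y z.1.2 = X z.2.1.2 + Y z.2.1.2
  right₂₃ : Y z.2.1.1 = Y z.2.2.1.1
  right₂₃' : Y z.2.1.2 = Y z.2.2.1.2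
  add₃₄ : X z.2.2.1.1 + Y z.2.2.1.1 = X z.2.2.2.1 + Y z.2.2.2.1
  right₃₄' : Y z.2.2.1.2 = Y z.2.2.2.2

section Algebra

variable {X Y : α → G} {z : (α × α) × (α × α) × (α × α) × (α × α)}

lemma IsKatzTaoChain.right_sub_right (h : IsKatzTaoChain X Y z) :
    Y z.2.1.1 - Y z.2.1.2 = Y z.1.1 - Y z.1.2 :=
  calc Y z.2.1.1 - Y z.2.1.2
      = X z.2.1.1 + Y z.2.1.1 - (X z.2.1.2 + Y z.2.1.2) := by
        rw [h.fiber₂, add_sub_add_left_eq_sub]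
    _ = X z.1.1 + Y z.1.1 - (X z.1.2 + Y z.1.2) := by rw [h.add₁₂, h.add₁₂']
    _ = Y z.1.1 - Y z.1.2 := by rw [h.fiber₁, add_sub_add_left_eq_sub]

lemma IsKatzTaoChain.sub_eq (h : IsKatzTaoChain X Y z) :
    X z.2.2.2.2 - Y z.2.2.2.2 = X z.2.2.1.1 - Y z.2.2.2.1 + (Y z.1.1 - Y z.1.2) :=
  calc X z.2.2.2.2 - Y z.2.2.2.2
      = X z.2.2.2.1 + Y z.2.2.2.1 - Y z.2.2.2.1 - Y z.2.2.1.2 := by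
        rw [add_sub_cancel_right, h.fiber₄, h.right₃₄']
    _ = X z.2.2.1.1 - Y z.2.2.2.1 + (Y z.2.2.1.1 - Y z.2.2.1.2) := by
        rw [← h.add₃₄]
        abel
    _ = X z.2.2.1.1 - Y z.2.2.2.1 + (Y z.1.1 - Y z.1.2) := by
        rw [← h.right₂₃, ← h.right₂₃', h.right_sub_right]

/-- The values along a Katz–Tao chain, expressed in those of the first pair, the third `X`, the
first `Y` of the last pair, and the last sample point. -/
def katzTaoDecode (w : (((G × G) × (G × G)) × G × G) × (G × G)) :
    ((G × G) × (G × G)) × ((G × G) × (G × G)) × ((G × G) × (G × G)) × ((G × G) × (G × G)) :=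
  let ⟨⟨⟨⟨x₁, y₁⟩, ⟨x₁', y₁'⟩⟩, x₃, y₄⟩, ⟨x₄', y₄'⟩⟩ := w
  let x₂ := x₁ + y₁' - y₄'
  let y₂ := y₁ - y₁' + y₄'
  (((x₁, y₁), (x₁', y₁')), ((x₂, y₂), (x₂, y₄')), ((x₃, y₂), (x₃, y₄')), ((x₄', y₄), (x₄', y₄')))

lemma IsKatzTaoChain.decode_eq (h : IsKatzTaoChain X Y z) :
    let W : α → G × G := fun a => (X a, Y a)
    let V := Prod.map W W
    Prod.map V (Prod.map V (Prod.map V V)) z =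
      katzTaoDecode ((V z.1, X z.2.2.1.1, Y z.2.2.2.1), W z.2.2.2.2) := by
  intro W V
  have hy₂' : Y z.2.1.2 = Y z.2.2.2.2 := h.right₂₃'.trans h.right₃₄'
  have hx₂' : X z.2.1.2 = X z.1.1 + Y z.1.2 - Y z.2.2.2.2 := by
    rw [h.fiber₁, h.add₁₂', hy₂', add_sub_cancel_right]
  have hy₂ : Y z.2.1.1 = Y z.1.1 - Y z.1.2 + Y z.2.2.2.2 := by
    rw [← h.right_sub_right, hy₂', sub_add_cancel]
  simp only [V, W, katzTaoDecode, Prod.map, h.fiber₂, hx₂', hy₂, hy₂', ← h.right₂₃, ← h.fiber₃,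
    h.right₃₄', h.fiber₄]

end Algebra

variable [Finite α] [MeasurableSpace α] [DiscreteMeasurableSpace α]

lemma exists_measure_isKatzTaoChain (P : Measure α) [IsProbabilityMeasure P] (X Y : α → G) :
    ∃ μ : Measure ((α × α) × (α × α) × (α × α) × (α × α)), IsProbabilityMeasure μ ∧
      (∀ᵐ z ∂μ, IsKatzTaoChain X Y z) ∧
      (MeasurePreserving (fun z => z.1) μ (condIndepCoupling P P X X) ∧
        MeasurePreserving (fun z => z.2.2.1.1) μ P ∧ MeasurePreserving (fun z => z.2.2.2.1) μ P ∧
        MeasurePreserving (fun z => z.2.2.2.2) μ P) ∧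
      let W : α → G × G := fun a => (X a, Y a)
      let V := Prod.map W W
      8 * entOf P W - 4 * entOf P X - 3 * entOf P (fun a => X a + Y a) - 3 * entOf P Y ≤
        entOf μ (Prod.map V (Prod.map V (Prod.map V V))) := by
  have hX (s : G) : P (X ⁻¹' {s}) = P (X ⁻¹' {s}) := rfl
  have hQ := isProbabilityMeasure_condIndepCoupling hX
  have hfst := measurePreserving_fst_condIndepCoupling hX
  have hsnd := measurePreserving_snd_condIndepCoupling hX
  have hfiber : ∀ᵐ e ∂condIndepCoupling P P X X, X e.1 = X e.2 := ae_eq_condIndepCoupling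
  let W : α → G × G := fun a => (X a, Y a)
  let sum : α → G := fun a => X a + Y a
  have hWX : X.FactorsThrough W := fun _ _ h => congrArg Prod.fst h
  have hWY : Y.FactorsThrough W := fun _ _ h => congrArg Prod.snd h
  have hWS : sum.FactorsThrough W := fun _ _ h => congrArg (fun w => w.1 + w.2) h
  have hWW {f g : α → G} (hf : f.FactorsThrough W) (hg : g.FactorsThrough W) :
      (Prod.map f g).FactorsThrough (Prod.map W W) := fun _ _ h =>
    Prod.ext (hf (congrArg Prod.fst h)) (hg (congrArg Prod.snd h))
  obtain ⟨μ, hμ, ⟨hz₁, hz₂, hz₃, hz₄⟩, hlink, hent⟩ :=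
    exists_condIndep_chain (Q := condIndepCoupling P P X X) (hWW hWS hWS) (hWW hWY hWY)
      (hWW hWS hWY)
  refine ⟨μ, hμ, ?_, ⟨hz₁, hfst.comp hz₃, hfst.comp hz₄, hsnd.comp hz₄⟩, ?_⟩
  · filter_upwards [hlink, hz₁.quasiMeasurePreserving.ae hfiber,
      hz₂.quasiMeasurePreserving.ae hfiber, hz₃.quasiMeasurePreserving.ae hfiber,
      hz₄.quasiMeasurePreserving.ae hfiber] with z ⟨hs, hr, ht⟩ h₁ h₂ h₃ h₄
    exact ⟨h₁, h₂, h₃, h₄, congrArg Prod.fst hs, congrArg Prod.snd hs, congrArg Prod.fst hr,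
      congrArg Prod.snd hr, congrArg Prod.fst ht, congrArg Prod.snd ht⟩
  · change 8 * entOf P W - 4 * entOf P X - 3 * entOf P sum - 3 * entOf P Y ≤ _
    rw [hent, entOf_prodMap_condIndepCoupling hX hWX hWX]
    have hSS := entOf_prodMap_le_add hfst hsnd sum sum
    have hYY := entOf_prodMap_le_add hfst hsnd Y Y
    have hSY := entOf_prodMap_le_add hfst hsnd sum Y
    linarith

theorem entOf_sub_le (P : Measure α) [IsProbabilityMeasure P] (X Y : α → G) :
    entOf P (fun a => X a - Y a) ≤ 3 * entOf P (fun a => X a + Y a) + 4 * entOf P X +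
      4 * entOf P Y - 5 * entOf P (fun a => (X a, Y a)) := by
  obtain ⟨μ, hμ, hchain, ⟨hz₁, hz₃, hz₄, hz₄'⟩, hent⟩ := exists_measure_isKatzTaoChain P X Y
  let W : α → G × G := fun a => (X a, Y a)
  let f (z : (α × α) × (α × α) × (α × α) × (α × α)) :=
    (Prod.map W W z.1, X z.2.2.1.1, Y z.2.2.2.1)
  have hWX : X.FactorsThrough W := fun _ _ h => congrArg Prod.fst h
  have hdecode := entOf_le_of_ae_eq_comp (P := μ) katzTaoDecode (f := fun z => (f z, W z.2.2.2.2))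
    (hchain.mono fun z hz => hz.decode_eq)
  have hsub : entOf μ (fun z => (f z, W z.2.2.2.2)) + entOf P (fun a => X a - Y a) ≤
      entOf μ f + entOf P W := by
    rw [← entOf_comp_measurePreserving hz₄' fun a => X a - Y a, ← entOf_comp_measurePreserving hz₄']
    exact entOf_prodMk_add_le (fun w => w.2.1 - w.2.2 + (w.1.1.2 - w.1.2.2)) (fun w => w.1 - w.2)
      (hchain.mono fun z hz => hz.sub_eq) (.of_forall fun _ => rfl)
  have hf : entOf μ f ≤ 2 * entOf P W + entOf P Y := by
    have h₁ : entOf μ (fun z => Prod.map W W z.1) = entOf P W + entOf P W - entOf P X :=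
      (entOf_comp_measurePreserving hz₁ _).trans
        (entOf_prodMap_condIndepCoupling (fun _ => rfl) hWX hWX)
    have h₂ := entOf_prodMk_le_add (P := μ) (fun z => Prod.map W W z.1)
      fun z => (X z.2.2.1.1, Y z.2.2.2.1)
    have h₃ := entOf_prodMk_le_add (P := μ) (fun z => X z.2.2.1.1) fun z => Y z.2.2.2.1
    rw [entOf_comp_measurePreserving hz₃ X, entOf_comp_measurePreserving hz₄ Y] at h₃
    linarith
  linarith

end KatzTao

section Rounding

lemma entOf_sub_le_of_rounding {α : Type*} [Finite α] [MeasurableSpace α]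
    [DiscreteMeasurableSpace α] {P : Measure α} [IsProbabilityMeasure P] {X Y S D : α → ℤ}
    (hS : ∀ a, X a + Y a = S a ∨ X a + Y a = S a - 1)
    (hD : ∀ a, D a = X a - Y a ∨ D a = X a - Y a - 1) :
    entOf P D ≤ 3 * entOf P S + 4 * entOf P X + 4 * entOf P Y -
      5 * entOf P (fun a => (X a, Y a)) + 4 := by
  have hsum : entOf P (fun a => X a + Y a) ≤ entOf P S + 1 :=
    entOf_le_add_one (fun s => s - 1) (.of_forall hS)
  have hdiff : entOf P D ≤ entOf P (fun a => X a - Y a) + 1 :=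
    entOf_le_add_one (fun s => s - 1) (.of_forall hD)
  linarith [entOf_sub_le P X Y]

section Floor

variable {R : Type*} [Ring R] [LinearOrder R] [IsStrictOrderedRing R] [FloorRing R]

lemma floor_add_floor_eq_or (x y : R) : ⌊x⌋ + ⌊y⌋ = ⌊x + y⌋ ∨ ⌊x⌋ + ⌊y⌋ = ⌊x + y⌋ - 1 := by
  have hle := Int.le_floor_add x y
  have hge := Int.le_floor_add_floor x y
  omega

lemma floor_sub_eq_or (x y : R) : ⌊x - y⌋ = ⌊x⌋ - ⌊y⌋ ∨ ⌊x - y⌋ = ⌊x⌋ - ⌊y⌋ - 1 := by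
  have h := floor_add_floor_eq_or (x - y) y
  rw [sub_add_cancel] at h
  omega

lemma finite_range_floor {ι : Type*} {f : ι → R} {C : R} (hf : ∀ i, |f i| ≤ C) :
    (range fun i => ⌊f i⌋).Finite := by
  refine (finite_Icc ⌊-C⌋ ⌊C⌋).subset (range_subset_iff.2 fun i => ?_)
  exact ⟨Int.floor_mono (neg_le_of_abs_le (hf i)), Int.floor_mono (le_of_abs_le (hf i))⟩

end Floor

variable {Ω : Type*} [MeasurableSpace Ω] {P : Measure Ω}

lemma entOf_map_rangeFactorization {β S : Type*} [Countable β] [MeasurableSpace β]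
    [MeasurableSingletonClass β] {Z : Ω → β} (hZ : Measurable Z) (f : β → S) :
    entOf (P.map (rangeFactorization Z)) (fun z => f z) = entOf P (fun ω => f (Z ω)) :=
  (entOf_comp_measurePreserving (hZ.subtype_mk.measurePreserving P) fun z : range Z => f z).symm

lemma entOf_floor_sub_le [IsProbabilityMeasure P] {X Y : Ω → ℝ} (hX : Measurable X)
    (hY : Measurable Y) {C : ℝ} (hXC : ∀ ω, |X ω| ≤ C) (hYC : ∀ ω, |Y ω| ≤ C) :
    entOf P (fun ω => ⌊X ω - Y ω⌋) ≤ 3 * entOf P (fun ω => ⌊X ω + Y ω⌋) +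
      4 * entOf P (fun ω => ⌊X ω⌋) + 4 * entOf P (fun ω => ⌊Y ω⌋) -
        5 * entOf P (fun ω => (⌊X ω⌋, ⌊Y ω⌋)) + 4 := by
  let Z (ω : Ω) : (ℤ × ℤ) × ℤ × ℤ := ((⌊X ω⌋, ⌊Y ω⌋), (⌊X ω + Y ω⌋, ⌊X ω - Y ω⌋))
  have hZ : Measurable Z := by fun_prop
  have hfin : (range Z).Finite := by
    have hadd (ω : Ω) : |X ω + Y ω| ≤ C + C := (abs_add_le _ _).trans (add_le_add (hXC ω) (hYC ω))
    have hsub (ω : Ω) : |X ω - Y ω| ≤ C + C := (abs_sub _ _).trans (add_le_add (hXC ω) (hYC ω))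
    refine (((finite_range_floor hXC).prod (finite_range_floor hYC)).prod
      ((finite_range_floor hadd).prod (finite_range_floor hsub))).subset
      (range_subset_iff.2 fun ω => ?_)
    simp only [Z, mem_prod, mem_range_self, and_self]
  have := hfin.to_subtype
  have : IsProbabilityMeasure (P.map (rangeFactorization Z)) :=
    Measure.isProbabilityMeasure_map hZ.subtype_mk.aemeasurable
  have hbound := entOf_sub_le_of_rounding (P := P.map (rangeFactorization Z))
    (X := fun z => z.1.1.1) (Y := fun z => z.1.1.2) (S := fun z => z.1.2.1) (D := fun z => z.1.2.2)
    (by rintro ⟨_, ω, rfl⟩; exact floor_add_floor_eq_or (X ω) (Y ω))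
    (by rintro ⟨_, ω, rfl⟩; exact floor_sub_eq_or (X ω) (Y ω))
  rw [entOf_map_rangeFactorization hZ fun z => z.1.1,
    entOf_map_rangeFactorization hZ fun z => z.1.2,
    entOf_map_rangeFactorization hZ fun z => z.2.1,
    entOf_map_rangeFactorization hZ fun z => z.2.2,
    entOf_map_rangeFactorization hZ fun z => z.1] at hbound
  exact hbound

end Rounding

section Dyadic

lemma intCast_div_injective {K : Type*} [DivisionRing K] [CharZero K] {c : K} (hc : c ≠ 0) :
    Function.Injective fun m : ℤ => (m : K) / c :=
  fun _ _ h => Int.cast_injective ((div_left_inj' hc).1 h)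

variable {Ω : Type*} [MeasurableSpace Ω] (P : Measure Ω) (n : ℕ) (X Y : Ω → ℝ)

lemma Hn_eq_entOf_floor : Hn P n X = entOf P (fun ω => ⌊(2 : ℝ) ^ n * X ω⌋) :=
  entOf_comp_injective (intCast_div_injective (by positivity)) fun ω => ⌊(2 : ℝ) ^ n * X ω⌋

lemma Hn2_eq_entOf_floor :
    Hn2 P n X Y = entOf P (fun ω => (⌊(2 : ℝ) ^ n * X ω⌋, ⌊(2 : ℝ) ^ n * Y ω⌋)) :=
  entOf_comp_injective
    ((intCast_div_injective (by positivity)).prodMap (intCast_div_injective (by positivity)))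
    fun ω => (⌊(2 : ℝ) ^ n * X ω⌋, ⌊(2 : ℝ) ^ n * Y ω⌋)

end Dyadic

/-- Lemma: there is an absolute constant `A > 0` such that for all real random variables
`X, Y` with bounded ranges (not necessarily independent) and all `n`,
`Hₙ(X − Y) ≤ 3Hₙ(X+Y) + 4Hₙ(X) + 4Hₙ(Y) − 5Hₙ(X,Y) + A`. -/
theorem entropy_difference_bound :
    ∃ A : ℝ, 0 < A ∧
      ∀ (Ω : Type) (mΩ : MeasurableSpace Ω) (P : Measure Ω),
        IsProbabilityMeasure P →
        ∀ (X Y : Ω → ℝ), Measurable X → Measurable Y →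
          ∀ c : ℝ, (∀ ω, |X ω| ≤ c ∧ |Y ω| ≤ c) →
            ∀ n : ℕ,
              Hn P n (fun ω => X ω - Y ω) ≤
                3 * Hn P n (fun ω => X ω + Y ω) + 4 * Hn P n X + 4 * Hn P n Y -
                  5 * Hn2 P n X Y + A := by
  refine ⟨4, by norm_num, fun Ω _ P _ X Y hX hY c hc n => ?_⟩
  have hscale {x : ℝ} (hx : |x| ≤ c) : |2 ^ n * x| ≤ 2 ^ n * c := by
    rw [abs_mul, abs_of_pos (by positivity)]
    gcongr
  simp only [Hn_eq_entOf_floor, Hn2_eq_entOf_floor, mul_add, mul_sub]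
  exact entOf_floor_sub_le (hX.const_mul _) (hY.const_mul _) (fun ω => hscale (hc ω).1)
    fun ω => hscale (hc ω).2
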